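/- arXiv:2509.03474 — 4 statements merged into one kernel-verified Lean document; each statement's English description precedes it below -/
import Mathlib

section
/- Let n, p ∈ ℕ. Let A : ℝ → Matrix (Fin n) (Fin n) ℝ, B : ℝ → Matrix (Fin n) (Fin p) ℝ, and v : ℝ → (Fin p → ℝ) be continuous on [0,1]. Let Φ : ℝ → Matrix (Fin n) (Fin n) ℝ satisfy Φ 0 = 1, Φ t invertible for every t ∈ [0,1], and Φ has derivative A t * Φ t at every t ∈ [0,1] within [0,1]. Suppose z : ℝ → (Fin n → ℝ) is continuous on [0,1] with z 0 = 0, and for every t ∈ [0,1] z has derivative A t *ᵥ z t + B t *ᵥ v t at t within [0,1]. Then for every t ∈ [0,1], z t = Φ t *ᵥ (∫ s in (0:ℝ)..t, (Φ s)⁻¹ *ᵥ (B s *ᵥ v s)). -/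
open scoped Matrix

attribute [local instance] Matrix.frobeniusNormedAddCommGroup Matrix.frobeniusNormedSpace

/-!
Multiplying a solution `z` of `ż = A z + f` by `Φ⁻¹` removes the linear part: since `Φ̇ = A Φ` gives
`(Φ⁻¹)˙ = -Φ⁻¹ A`, the product rule leaves `(Φ⁻¹ z)˙ = Φ⁻¹ f`, which no longer involves `z`, and the
fundamental theorem of calculus determines `Φ⁻¹ z`.
-/

open MeasureTheory Set
open scoped Ring

section Derivatives

variable {𝕜 : Type*} [NontriviallyNormedField 𝕜] {s : Set 𝕜} {t : 𝕜}

theorem hasDerivWithinAt_ringInverse_comp {R : Type*} [NormedRing R] [NormedAlgebra 𝕜 R]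
    [HasSummableGeomSeries R] {Φ : 𝕜 → R} {Φ' : R}
    (hΦ : HasDerivWithinAt Φ Φ' s t) (hunit : IsUnit (Φ t)) :
    HasDerivWithinAt (fun r ↦ (Φ r)⁻¹ʳ) (-((Φ t)⁻¹ʳ * Φ' * (Φ t)⁻¹ʳ)) s t := by
  obtain ⟨u, hu⟩ := hunit
  have hinv := hasFDerivAt_ringInverse (𝕜 := 𝕜) u
  rw [hu] at hinv
  simpa [← hu, Function.comp_def] using hinv.comp_hasDerivWithinAt t hΦ

variable {E : Type*} [NormedAddCommGroup E] [NormedSpace 𝕜 E] [CompleteSpace E]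

theorem hasDerivWithinAt_ringInverse_apply {Φ : 𝕜 → E →L[𝕜] E} {A : E →L[𝕜] E}
    {z : 𝕜 → E} {f : E} (hunit : IsUnit (Φ t)) (hΦ : HasDerivWithinAt Φ (A * Φ t) s t)
    (hz : HasDerivWithinAt z (A (z t) + f) s t) :
    HasDerivWithinAt (fun r ↦ (Φ r)⁻¹ʳ (z r)) ((Φ t)⁻¹ʳ f) s t := by
  have hinv : HasDerivWithinAt (fun r ↦ (Φ r)⁻¹ʳ) (-((Φ t)⁻¹ʳ * A)) s t := by
    simpa only [mul_assoc, Ring.mul_inverse_cancel _ hunit, mul_one] using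
      hasDerivWithinAt_ringInverse_comp hΦ hunit
  simpa using hinv.clm_apply hz

end Derivatives

theorem intervalIntegrable_clm_apply {𝕜 E F : Type*} [NontriviallyNormedField 𝕜]
    [NormedAddCommGroup E] [NormedSpace 𝕜 E] [NormedAddCommGroup F] [NormedSpace 𝕜 F] {a b : ℝ}
    {L : ℝ → E →L[𝕜] F} {f : ℝ → E}
    (hL : ContinuousOn L (uIcc a b)) (hf : IntervalIntegrable f volume a b) :
    IntervalIntegrable (fun s ↦ L s (f s)) volume a b := by
  obtain ⟨C, hC⟩ := isCompact_uIcc.exists_bound_of_continuousOn hL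
  rw [intervalIntegrable_iff] at hf ⊢
  exact (ContinuousLinearMap.id 𝕜 (E →L[𝕜] F)).integrable_of_bilin_of_bdd_left C
    ((hL.mono uIoc_subset_uIcc).aestronglyMeasurable measurableSet_uIoc)
    (ae_restrict_of_forall_mem measurableSet_uIoc fun s hs ↦ hC s (uIoc_subset_uIcc hs)) hf

theorem integral_eq_sub_of_hasDerivWithinAt_Icc {E : Type*} [NormedAddCommGroup E]
    [NormedSpace ℝ E] [CompleteSpace E] {a b : ℝ} {g g' : ℝ → E} (hab : a ≤ b)
    (hg : ∀ t ∈ Icc a b, HasDerivWithinAt g (g' t) (Icc a b) t)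
    (hg' : IntervalIntegrable g' volume a b) : ∫ s in a..b, g' s = g b - g a :=
  intervalIntegral.integral_eq_sub_of_hasDerivAt_of_le hab
    (fun t ht ↦ (hg t ht).continuousWithinAt)
    (fun t ht ↦ (hg t (Ioo_subset_Icc_self ht)).hasDerivAt (Icc_mem_nhds ht.1 ht.2)) hg'

theorem eq_apply_add_integral_of_hasDerivWithinAt {E : Type*} [NormedAddCommGroup E]
    [NormedSpace ℝ E] [CompleteSpace E] {a b : ℝ} {A Φ : ℝ → E →L[ℝ] E} {z f : ℝ → E}
    (hab : a ≤ b) (hunit : ∀ t ∈ Icc a b, IsUnit (Φ t))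
    (hΦ : ∀ t ∈ Icc a b, HasDerivWithinAt Φ (A t * Φ t) (Icc a b) t)
    (hz : ∀ t ∈ Icc a b, HasDerivWithinAt z (A t (z t) + f t) (Icc a b) t)
    (hf : IntervalIntegrable f volume a b) :
    z b = Φ b ((Φ a)⁻¹ʳ (z a) + ∫ s in a..b, (Φ s)⁻¹ʳ (f s)) := by
  have hinv : ContinuousOn (fun s ↦ (Φ s)⁻¹ʳ) (uIcc a b) := by
    rw [uIcc_of_le hab]
    exact fun t ht ↦ (hasDerivWithinAt_ringInverse_comp (hΦ t ht) (hunit t ht)).continuousWithinAt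
  have hintegral : ∫ s in a..b, (Φ s)⁻¹ʳ (f s) = (Φ b)⁻¹ʳ (z b) - (Φ a)⁻¹ʳ (z a) :=
    integral_eq_sub_of_hasDerivWithinAt_Icc hab
      (fun t ht ↦ hasDerivWithinAt_ringInverse_apply (hunit t ht) (hΦ t ht) (hz t ht))
      (intervalIntegrable_clm_apply hinv hf)
  rw [hintegral, add_sub_cancel, ← mul_apply_eq_comp,
    Ring.mul_inverse_cancel _ (hunit b (right_mem_Icc.mpr hab)), one_apply_eq_self]

theorem map_ringInverse {M N F : Type*} [MonoidWithZero M] [MonoidWithZero N] [EquivLike F M N]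
    [MulEquivClass F M N] (e : F) (x : M) : e x⁻¹ʳ = (e x)⁻¹ʳ := by
  by_cases hx : IsUnit x
  · have hleft : e x⁻¹ʳ * e x = 1 := by rw [← map_mul, Ring.inverse_mul_cancel x hx, map_one]
    exact left_inv_eq_right_inv hleft (Ring.mul_inverse_cancel (e x) (hx.map e))
  · have hex : ¬IsUnit (e x) := by rwa [isUnit_map_iff]
    rw [Ring.inverse_non_unit x hx, Ring.inverse_non_unit (e x) hex, map_zero]

section MulVecCLM

variable {ι : Type*} [Fintype ι] [DecidableEq ι]
  (𝕜 : Type*) [NontriviallyNormedField 𝕜] [CompleteSpace 𝕜]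

/-- The matrix–vector product as an algebra isomorphism from square matrices to the continuous
linear operators on `ι → 𝕜`, through which results on operators apply to matrices. -/
noncomputable def mulVecCLM : Matrix ι ι 𝕜 ≃ₐ[𝕜] ((ι → 𝕜) →L[𝕜] (ι → 𝕜)) :=
  Matrix.toLinAlgEquiv'.trans (Module.End.toContinuousLinearMap (ι → 𝕜))

variable {𝕜}

theorem mulVecCLM_apply (M : Matrix ι ι 𝕜) (x : ι → 𝕜) : mulVecCLM 𝕜 M x = M *ᵥ x := rfl

theorem ringInverse_mulVecCLM (M : Matrix ι ι 𝕜) : (mulVecCLM 𝕜 M)⁻¹ʳ = mulVecCLM 𝕜 M⁻¹ := by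
  rw [Matrix.nonsing_inv_eq_ringInverse, map_ringInverse]

theorem hasDerivWithinAt_mulVecCLM {M : 𝕜 → Matrix ι ι 𝕜} {M' : Matrix ι ι 𝕜} {s : Set 𝕜} {t : 𝕜}
    (hM : HasDerivWithinAt M M' s t) :
    HasDerivWithinAt (fun r ↦ mulVecCLM 𝕜 (M r)) (mulVecCLM 𝕜 M') s t :=
  (LinearMap.toContinuousLinearMap (mulVecCLM 𝕜 (ι := ι)).toLinearMap).hasFDerivAt
    |>.comp_hasDerivWithinAt t hM

end MulVecCLM

theorem continuousOn_mulVec {X m n R : Type*} [TopologicalSpace X] [Fintype n]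
    [NonUnitalNonAssocSemiring R] [TopologicalSpace R] [ContinuousAdd R] [ContinuousMul R]
    {M : X → Matrix m n R} {x : X → n → R} {s : Set X}
    (hM : ContinuousOn M s) (hx : ContinuousOn x s) : ContinuousOn (fun y ↦ M y *ᵥ x y) s :=
  (continuous_fst.matrix_mulVec continuous_snd).comp_continuousOn (hM.prodMk hx)

theorem variation_of_constants_uniqueness_general {ι : Type*} [Fintype ι] [DecidableEq ι]
    {a b : ℝ} {A Φ : ℝ → Matrix ι ι ℝ} {z f : ℝ → ι → ℝ}
    (hunit : ∀ t ∈ Icc a b, IsUnit (Φ t))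
    (hΦ : ∀ t ∈ Icc a b, HasDerivWithinAt Φ (A t * Φ t) (Icc a b) t)
    (hz : ∀ t ∈ Icc a b, HasDerivWithinAt z (A t *ᵥ z t + f t) (Icc a b) t)
    (hf : IntervalIntegrable f volume a b) {t : ℝ} (ht : t ∈ Icc a b) :
    z t = Φ t *ᵥ ((Φ a)⁻¹ *ᵥ z a + ∫ s in a..t, (Φ s)⁻¹ *ᵥ f s) := by
  have hsub : Icc a t ⊆ Icc a b := Icc_subset_Icc_right ht.2
  have hzt := eq_apply_add_integral_of_hasDerivWithinAt (A := fun s ↦ mulVecCLM ℝ (A s))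
    (Φ := fun s ↦ mulVecCLM ℝ (Φ s)) ht.1
    (fun s hs ↦ (hunit s (hsub hs)).map (mulVecCLM ℝ))
    (fun s hs ↦ by simpa using hasDerivWithinAt_mulVecCLM ((hΦ s (hsub hs)).mono hsub))
    (fun s hs ↦ (hz s (hsub hs)).mono hsub)
    (hf.mono_set (uIcc_subset_uIcc_left (Icc_subset_uIcc ht)))
  simpa only [ringInverse_mulVecCLM, mulVecCLM_apply] using hzt

theorem variation_of_constants_uniqueness
    (n p : ℕ)
    (A : ℝ → Matrix (Fin n) (Fin n) ℝ)
    (B : ℝ → Matrix (Fin n) (Fin p) ℝ)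
    (v : ℝ → (Fin p → ℝ))
    (hA : ContinuousOn A (Set.Icc (0:ℝ) 1))
    (hB : ContinuousOn B (Set.Icc (0:ℝ) 1))
    (hv : ContinuousOn v (Set.Icc (0:ℝ) 1))
    (Φ : ℝ → Matrix (Fin n) (Fin n) ℝ)
    (hΦ0 : Φ 0 = 1)
    (hinv : ∀ t ∈ Set.Icc (0:ℝ) 1, IsUnit (Φ t))
    (hΦ : ∀ t ∈ Set.Icc (0:ℝ) 1,
      HasDerivWithinAt Φ (A t * Φ t) (Set.Icc (0:ℝ) 1) t)
    (z : ℝ → (Fin n → ℝ))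
    (hzc : ContinuousOn z (Set.Icc (0:ℝ) 1))
    (hz0 : z 0 = 0)
    (hz : ∀ t ∈ Set.Icc (0:ℝ) 1,
      HasDerivWithinAt z (A t *ᵥ z t + B t *ᵥ v t) (Set.Icc (0:ℝ) 1) t) :
    ∀ t ∈ Set.Icc (0:ℝ) 1,
      z t = Φ t *ᵥ (∫ s in (0:ℝ)..t, (Φ s)⁻¹ *ᵥ (B s *ᵥ v s)) := by
  intro t ht
  simpa [hz0] using variation_of_constants_uniqueness_general hinv hΦ hz
    ((continuousOn_mulVec hB hv).intervalIntegrable_of_Icc zero_le_one) ht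
end

section
/- Let n, p ∈ ℕ and let M : ℝ → Matrix (Fin n) (Fin p) ℝ be continuous on [0,1]. Suppose that for every s ∈ [0,1] the matrix M s has full row rank, i.e., the linear map z ↦ (M s)ᵀ *ᵥ z is injective. Then the Gramian W := ∫ s in (0:ℝ)..1, M s * (M s)ᵀ is positive definite, and in particular invertible. -/
open scoped Matrix

attribute [local instance] Matrix.frobeniusNormedAddCommGroup Matrix.frobeniusNormedSpace

/-!
For a family of positive semidefinite matrices `A s` and `W = ∫ A s`, the number `x⋆ W x` is the
integral of the nonnegative function `x⋆ (A s) x`, so `W x = 0` exactly when `(A s) x = 0` for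
almost every `s`. For `A s = (M s) (M s)ᴴ` the condition becomes `(M s)ᴴ x = 0`, and by continuity
of `M` it then holds for every `s`. So `W` is positive definite as soon as the matrices `(M s)ᴴ`
have no common nonzero kernel vector.
-/

open Set MeasureTheory
open scoped ComplexOrder

section Integral

variable {α m n 𝕜 : Type*} [MeasurableSpace α] {μ : Measure α} [Fintype n] [RCLike 𝕜]

-- Integrability of matrix-valued functions is stated entrywise because `Integrable` would pick up
-- the product topology on matrices, which is not reducibly that of the Frobenius norm.
theorem integrable_mulVec_apply {A : α → Matrix m n 𝕜}
    (hA : ∀ i j, Integrable (fun s => A s i j) μ) (x : n → 𝕜) (i : m) :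
    Integrable (fun s => (A s *ᵥ x) i) μ :=
  integrable_finsetSum _ fun j _ => (hA i j).mul_const (x j)

variable [Fintype m]

theorem integral_matrix_apply {A : α → Matrix m n 𝕜}
    (hA : ∀ i j, Integrable (fun s => A s i j) μ) (i : m) (j : n) :
    (∫ s, A s ∂μ) i j = ∫ s, A s i j ∂μ := by
  let ofCLM := (Matrix.ofLinearEquiv (m := m) (n := n) (α := 𝕜) ℝ).toLinearMap.toContinuousLinearMap
  let entryCLM := (Matrix.entryLinearMap ℝ 𝕜 i j).toContinuousLinearMap
  exact (entryCLM.integral_comp_comm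
    (ofCLM.integrable_comp (.of_eval fun k => .of_eval (hA k)))).symm

theorem integrable_dotProduct_mulVec {A : α → Matrix m n 𝕜}
    (hA : ∀ i j, Integrable (fun s => A s i j) μ) (x : n → 𝕜) (y : m → 𝕜) :
    Integrable (fun s => y ⬝ᵥ A s *ᵥ x) μ :=
  integrable_finsetSum _ fun i _ => (integrable_mulVec_apply hA x i).const_mul (y i)

theorem integral_mulVec_apply {A : α → Matrix m n 𝕜}
    (hA : ∀ i j, Integrable (fun s => A s i j) μ) (x : n → 𝕜) (i : m) :
    ((∫ s, A s ∂μ) *ᵥ x) i = ∫ s, (A s *ᵥ x) i ∂μ := by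
  simp only [Matrix.mulVec, dotProduct, integral_matrix_apply hA, ← integral_mul_const]
  exact (integral_finsetSum _ fun j _ => (hA i j).mul_const (x j)).symm

theorem dotProduct_integral_mulVec {A : α → Matrix m n 𝕜}
    (hA : ∀ i j, Integrable (fun s => A s i j) μ) (x : n → 𝕜) (y : m → 𝕜) :
    y ⬝ᵥ (∫ s, A s ∂μ) *ᵥ x = ∫ s, y ⬝ᵥ A s *ᵥ x ∂μ := by
  simp only [dotProduct, integral_mulVec_apply hA, ← integral_const_mul]
  exact (integral_finsetSum _ fun i _ => (integrable_mulVec_apply hA x i).const_mul (y i)).symm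

theorem isHermitian_integral {A : α → Matrix n n 𝕜}
    (hA : ∀ i j, Integrable (fun s => A s i j) μ) (hherm : ∀ᵐ s ∂μ, (A s).IsHermitian) :
    (∫ s, A s ∂μ).IsHermitian := by
  refine .ext fun i j => ?_
  calc
    star ((∫ s, A s ∂μ) j i) = ∫ s, star (A s j i) ∂μ := by
      rw [integral_matrix_apply hA]
      exact integral_conj.symm
    _ = ∫ s, A s i j ∂μ := integral_congr_ae (hherm.mono fun _ h => h.apply i j)
    _ = (∫ s, A s ∂μ) i j := (integral_matrix_apply hA i j).symm

theorem posSemidef_integral {A : α → Matrix n n 𝕜}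
    (hA : ∀ i j, Integrable (fun s => A s i j) μ) (hpos : ∀ᵐ s ∂μ, (A s).PosSemidef) :
    (∫ s, A s ∂μ).PosSemidef := by
  refine .of_dotProduct_mulVec_nonneg
    (isHermitian_integral hA (hpos.mono fun _ h => h.isHermitian)) fun x => ?_
  rw [dotProduct_integral_mulVec hA]
  exact integral_nonneg_of_ae (hpos.mono fun _ h => h.dotProduct_mulVec_nonneg x)

theorem rclike_integral_eq_zero_iff_of_nonneg_ae {f : α → 𝕜} (hf : 0 ≤ᵐ[μ] f)
    (hfi : Integrable f μ) : ∫ s, f s ∂μ = 0 ↔ f =ᵐ[μ] 0 := by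
  refine ⟨fun h => ?_, fun h => integral_eq_zero_of_ae h⟩
  have hre : (fun s => RCLike.re (f s)) =ᵐ[μ] 0 := by
    refine (integral_eq_zero_iff_of_nonneg_ae ?_ hfi.re).mp ?_
    · exact hf.mono fun s hs => (RCLike.nonneg_iff.mp hs).1
    · rw [integral_re hfi, h, map_zero]
  filter_upwards [hf, hre] with s hs hs_re
  exact RCLike.ext (by simpa using hs_re) (by simpa using (RCLike.nonneg_iff.mp hs).2)

theorem integral_mulVec_eq_zero_iff {A : α → Matrix n n 𝕜}
    (hA : ∀ i j, Integrable (fun s => A s i j) μ) (hpos : ∀ᵐ s ∂μ, (A s).PosSemidef) (x : n → 𝕜) :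
    (∫ s, A s ∂μ) *ᵥ x = 0 ↔ ∀ᵐ s ∂μ, A s *ᵥ x = 0 :=
  calc
    (∫ s, A s ∂μ) *ᵥ x = 0 ↔ ∫ s, star x ⬝ᵥ A s *ᵥ x ∂μ = 0 := by
      rw [← (posSemidef_integral hA hpos).dotProduct_mulVec_zero_iff,
        dotProduct_integral_mulVec hA]
    _ ↔ ∀ᵐ s ∂μ, star x ⬝ᵥ A s *ᵥ x = 0 :=
      rclike_integral_eq_zero_iff_of_nonneg_ae
        (hpos.mono fun _ h => h.dotProduct_mulVec_nonneg x) (integrable_dotProduct_mulVec hA x _)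
    _ ↔ ∀ᵐ s ∂μ, A s *ᵥ x = 0 :=
      Filter.eventually_congr (hpos.mono fun _ h => h.dotProduct_mulVec_zero_iff x)

theorem posDef_integral_iff {A : α → Matrix n n 𝕜}
    (hA : ∀ i j, Integrable (fun s => A s i j) μ) (hpos : ∀ᵐ s ∂μ, (A s).PosSemidef) :
    (∫ s, A s ∂μ).PosDef ↔ ∀ x, (∀ᵐ s ∂μ, A s *ᵥ x = 0) → x = 0 := by
  classical
  rw [(posSemidef_integral hA hpos).posDef_iff_isUnit, ← Matrix.mulVec_injective_iff_isUnit]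
  exact (injective_iff_map_eq_zero (∫ s, A s ∂μ).mulVecLin).trans
    (forall_congr' fun x => imp_congr_left (integral_mulVec_eq_zero_iff hA hpos x))

theorem posDef_integral_mul_conjTranspose_iff {M : α → Matrix m n 𝕜}
    (hM : ∀ i j, Integrable (fun s => (M s * (M s)ᴴ) i j) μ) :
    (∫ s, M s * (M s)ᴴ ∂μ).PosDef ↔ ∀ z, (∀ᵐ s ∂μ, (M s)ᴴ *ᵥ z = 0) → z = 0 := by
  have hpos : ∀ᵐ s ∂μ, (M s * (M s)ᴴ).PosSemidef :=
    .of_forall fun s => Matrix.posSemidef_self_mul_conjTranspose (M s)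
  simp only [posDef_integral_iff hM hpos, Matrix.self_mul_conjTranspose_mulVec_eq_zero]

end Integral

theorem gramian_posdef_of_full_row_rank_general {m n 𝕜 : Type*} [Fintype m] [DecidableEq m]
    [Fintype n] [RCLike 𝕜] {a b : ℝ} (hab : a < b) {M : ℝ → Matrix m n 𝕜}
    (hM : ContinuousOn M (Icc a b))
    (hker : ∀ z, (∀ s ∈ Icc a b, (M s)ᴴ *ᵥ z = 0) → z = 0) :
    (∫ s in a..b, M s * (M s)ᴴ).PosDef ∧ IsUnit (∫ s in a..b, M s * (M s)ᴴ) := by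
  have hint (i j : m) : IntegrableOn (fun s => (M s * (M s)ᴴ) i j) (Icc a b) :=
    (((continuous_id.matrix_mul continuous_id.matrix_conjTranspose).matrix_elem i
      j).comp_continuousOn hM).integrableOn_Icc
  have hW : (∫ s in a..b, M s * (M s)ᴴ).PosDef := by
    rw [intervalIntegral.integral_of_le hab.le, ← integral_Icc_eq_integral_Ioc,
      posDef_integral_mul_conjTranspose_iff hint]
    intro z hz
    have hcont : ContinuousOn (fun s => (M s)ᴴ *ᵥ z) (Icc a b) :=
      (continuous_id.matrix_conjTranspose.matrix_mulVec continuous_const).comp_continuousOn hM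
    exact hker z (Measure.eqOn_Icc_of_ae_eq volume hab.ne hz hcont continuousOn_const)
  exact ⟨hW, hW.isUnit⟩

theorem gramian_posdef_of_full_row_rank
    (n p : ℕ)
    (M : ℝ → Matrix (Fin n) (Fin p) ℝ)
    (hM : ContinuousOn M (Set.Icc (0:ℝ) 1))
    (hrank : ∀ s ∈ Set.Icc (0:ℝ) 1,
      Function.Injective (fun z : Fin n → ℝ => (M s)ᵀ *ᵥ z)) :
    (∫ s in (0:ℝ)..1, M s * (M s)ᵀ).PosDef ∧
    IsUnit (∫ s in (0:ℝ)..1, M s * (M s)ᵀ) := by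
  have h0 : (0 : ℝ) ∈ Icc 0 1 := left_mem_Icc.2 zero_le_one
  simpa only [Matrix.conjTranspose_eq_transpose_of_trivial] using
    gramian_posdef_of_full_row_rank_general zero_lt_one hM fun _ hz =>
      hrank 0 h0 ((hz 0 h0).trans (Matrix.mulVec_zero _).symm)
end

section
/- Let n, p ∈ ℕ. Let A : ℝ → Matrix (Fin n) (Fin n) ℝ and B : ℝ → Matrix (Fin n) (Fin p) ℝ be continuous on [0,1], and let Φ : ℝ → Matrix (Fin n) (Fin n) ℝ satisfy Φ 0 = 1, Φ t invertible for every t ∈ [0,1], and Φ has derivative A t * Φ t at every t ∈ [0,1] within [0,1]. Suppose the Gramian W := ∫ s in (0:ℝ)..1, ((Φ s)⁻¹ * B s) * ((Φ s)⁻¹ * B s)ᵀ is invertible. Then for every z₀, z₁ ∈ (Fin n → ℝ) there exist a continuous control v : ℝ → (Fin p → ℝ) and a function z : ℝ → (Fin n → ℝ) with z 0 = z₀, z 1 = z₁, and for every t ∈ [0,1], z has derivative A t *ᵥ z t + B t *ᵥ v t at t within [0,1]. -/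
open scoped Matrix

attribute [local instance] Matrix.frobeniusNormedAddCommGroup Matrix.frobeniusNormedSpace

/-!
Variation of constants, `z = Φ w`, turns `ż = A z + B v` into the driftless system `ẇ = M v` with
`M = Φ⁻¹ B`. There the control `v = Mᴴ η` moves `w` by `(∫ M Mᴴ) η`, so an invertible Gramian
allows every displacement to be prescribed through the choice of the constant vector `η`.
-/

open Set

theorem hasDerivWithinAt_mulVec {𝕜 R m n : Type*} [NontriviallyNormedField 𝕜] [NormedRing R]
    [NormedAlgebra 𝕜 R] [Fintype n] {F : 𝕜 → Matrix m n R} {F' : Matrix m n R}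
    {g : 𝕜 → n → R} {g' : n → R} {s : Set 𝕜} {t : 𝕜}
    (hF : HasDerivWithinAt F F' s t) (hg : HasDerivWithinAt g g' s t) :
    HasDerivWithinAt (fun x => F x *ᵥ g x) (F' *ᵥ g t + F t *ᵥ g') s t := by
  refine hasDerivWithinAt_pi.2 fun i => ?_
  have hFij (j : n) : HasDerivWithinAt (fun x => F x i j) (F' i j) s t :=
    hasDerivWithinAt_pi.1 (hasDerivWithinAt_pi.1 hF i) j
  have hsum := HasDerivWithinAt.fun_sum (u := Finset.univ)
    fun j _ => (hFij j).mul (hasDerivWithinAt_pi.1 hg j)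
  simpa [Matrix.mulVec, dotProduct, Finset.sum_add_distrib] using hsum

theorem hasDerivWithinAt_mulVec_of_fundamental {𝕜 R ι : Type*} [NontriviallyNormedField 𝕜]
    [NormedCommRing R] [NormedAlgebra 𝕜 R] [Fintype ι] [DecidableEq ι]
    {Φ : 𝕜 → Matrix ι ι R} {A : Matrix ι ι R} {w : 𝕜 → ι → R} {f : ι → R} {s : Set 𝕜} {t : 𝕜}
    (hΦ : HasDerivWithinAt Φ (A * Φ t) s t) (hinv : IsUnit (Φ t))
    (hw : HasDerivWithinAt w ((Φ t)⁻¹ *ᵥ f) s t) :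
    HasDerivWithinAt (fun x => Φ x *ᵥ w x) (A *ᵥ (Φ t *ᵥ w t) + f) s t := by
  have hdet : IsUnit (Φ t).det := (Matrix.isUnit_iff_isUnit_det _).1 hinv
  simpa [Matrix.mulVec_mulVec, Matrix.mul_nonsing_inv _ hdet] using hasDerivWithinAt_mulVec hΦ hw

theorem continuousOn_matrix_inv {X R ι : Type*} [TopologicalSpace X] [NormedCommRing R]
    [HasSummableGeomSeries R] [Fintype ι] [DecidableEq ι] {F : X → Matrix ι ι R} {s : Set X}
    (hF : ContinuousOn F s) (hinv : ∀ x ∈ s, IsUnit (F x)) :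
    ContinuousOn (fun x => (F x)⁻¹) s := by
  intro x hx
  obtain ⟨d, hd⟩ := (Matrix.isUnit_iff_isUnit_det _).1 (hinv x hx)
  exact (continuousAt_matrix_inv _ (hd ▸ NormedRing.inverse_continuousAt d)).comp_continuousWithinAt
    (hF x hx)

theorem continuousOn_matrix_mul {X R l m n : Type*} [TopologicalSpace X]
    [NonUnitalNonAssocSemiring R] [TopologicalSpace R] [ContinuousAdd R] [ContinuousMul R]
    [Fintype m] {F : X → Matrix l m R} {G : X → Matrix m n R} {s : Set X}
    (hF : ContinuousOn F s) (hG : ContinuousOn G s) : ContinuousOn (fun x => F x * G x) s :=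
  (continuous_fst.matrix_mul continuous_snd).comp_continuousOn (hF.prodMk hG)

theorem exists_continuous_eqOn_Icc {α X : Type*} [LinearOrder α] [TopologicalSpace α]
    [OrderTopology α] [TopologicalSpace X] {f : α → X} {a b : α} (hab : a ≤ b)
    (hf : ContinuousOn f (Icc a b)) : ∃ g : α → X, Continuous g ∧ EqOn g f (Icc a b) :=
  ⟨IccExtend hab ((Icc a b).domRestrict f), hf.domRestrict.Icc_extend',
    fun _ ht => IccExtend_of_mem hab _ ht⟩

section Control

variable {𝕜 ι κ : Type*} [RCLike 𝕜] [Fintype ι] [Fintype κ]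
  {A : ℝ → Matrix ι ι 𝕜} {B M : ℝ → Matrix ι κ 𝕜} {a b : ℝ}

/-- Controllability of `ż = A z + B v` on `[a, b]`: a continuous control steers any state at time
`a` to any state at time `b`. The control is continuous on all of `ℝ`, while the trajectory obeys
the equation on `[a, b]` only. -/
def IsControllableOn (A : ℝ → Matrix ι ι 𝕜) (B : ℝ → Matrix ι κ 𝕜) (a b : ℝ) : Prop :=
  ∀ z₀ z₁ : ι → 𝕜, ∃ (v : ℝ → κ → 𝕜) (z : ℝ → ι → 𝕜),
    Continuous v ∧ z a = z₀ ∧ z b = z₁ ∧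
      ∀ t ∈ Icc a b, HasDerivWithinAt z (A t *ᵥ z t + B t *ᵥ v t) (Icc a b) t

/-- The Gramian of the driftless system `ẇ = M v` on `[a, b]`. The controllability Gramian of
`ż = A z + B v` with fundamental matrix `Φ` is the case `M = Φ⁻¹ B`. -/
noncomputable def gramian (M : ℝ → Matrix ι κ 𝕜) (a b : ℝ) : Matrix ι ι 𝕜 :=
  ∫ s in a..b, M s * (M s)ᴴ

theorem gramian_congr (hab : a ≤ b) (h : EqOn M B (Icc a b)) : gramian M a b = gramian B a b :=
  intervalIntegral.integral_congr fun s hs => by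
    simp only [h (uIcc_of_le hab ▸ hs)]

theorem gramian_self (M : ℝ → Matrix ι κ 𝕜) (a : ℝ) : gramian M a a = 0 :=
  intervalIntegral.integral_same

theorem hasDerivAt_gramian (hM : Continuous M) (a t : ℝ) :
    HasDerivAt (gramian M a) (M t * (M t)ᴴ) t :=
  ((hM.matrix_mul hM.matrix_conjTranspose).integral_hasStrictDerivAt a t).hasDerivAt

theorem IsControllableOn.congr (hB : IsControllableOn A B a b) (h : EqOn B M (Icc a b)) :
    IsControllableOn A M a b := fun z₀ z₁ => by
  obtain ⟨v, z, hv, hz₀, hz₁, hz⟩ := hB z₀ z₁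
  exact ⟨v, z, hv, hz₀, hz₁, fun t ht => h ht ▸ hz t ht⟩

variable [DecidableEq ι]

theorem isControllableOn_zero_of_continuous_of_isUnit_gramian (hM : Continuous M)
    (hW : IsUnit (gramian M a b)) : IsControllableOn 0 M a b := by
  intro w₀ w₁
  have hdet : IsUnit (gramian M a b).det := (Matrix.isUnit_iff_isUnit_det _).1 hW
  set η : ι → 𝕜 := (gramian M a b)⁻¹ *ᵥ (w₁ - w₀) with hη
  refine ⟨fun t => (M t)ᴴ *ᵥ η, fun t => w₀ + gramian M a t *ᵥ η,
    hM.matrix_conjTranspose.matrix_mulVec continuous_const, ?_, ?_, fun t _ => ?_⟩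
  · simp [gramian_self]
  · simp [hη, Matrix.mul_nonsing_inv _ hdet]
  · have hw := (hasDerivWithinAt_mulVec (hasDerivAt_gramian hM a t).hasDerivWithinAt
      (hasDerivWithinAt_const t (Icc a b) η)).const_add w₀
    simpa using hw

theorem isControllableOn_zero_of_continuousOn_of_isUnit_gramian (hab : a ≤ b)
    (hM : ContinuousOn M (Icc a b)) (hW : IsUnit (gramian M a b)) :
    IsControllableOn 0 M a b := by
  obtain ⟨N, hN, hNM⟩ := exists_continuous_eqOn_Icc hab hM
  have hN₀ : IsControllableOn 0 N a b :=
    isControllableOn_zero_of_continuous_of_isUnit_gramian hN (gramian_congr hab hNM ▸ hW)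
  exact hN₀.congr hNM

theorem IsControllableOn.of_fundamental {Φ : ℝ → Matrix ι ι 𝕜} (hab : a ≤ b)
    (hinv : ∀ t ∈ Icc a b, IsUnit (Φ t))
    (hΦ : ∀ t ∈ Icc a b, HasDerivWithinAt Φ (A t * Φ t) (Icc a b) t)
    (h : IsControllableOn 0 (fun t => (Φ t)⁻¹ * B t) a b) : IsControllableOn A B a b := by
  intro z₀ z₁
  have hcancel {t : ℝ} (ht : t ∈ Icc a b) (x : ι → 𝕜) : Φ t *ᵥ (Φ t)⁻¹ *ᵥ x = x := by
    simp [Matrix.mul_nonsing_inv _ ((Matrix.isUnit_iff_isUnit_det _).1 (hinv t ht))]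
  obtain ⟨v, w, hv, hwa, hwb, hw⟩ := h ((Φ a)⁻¹ *ᵥ z₀) ((Φ b)⁻¹ *ᵥ z₁)
  refine ⟨v, fun t => Φ t *ᵥ w t, hv, ?_, ?_, fun t ht => ?_⟩
  · simp only [hwa, hcancel (left_mem_Icc.2 hab)]
  · simp only [hwb, hcancel (right_mem_Icc.2 hab)]
  · exact hasDerivWithinAt_mulVec_of_fundamental (hΦ t ht) (hinv t ht) (by simpa using hw t ht)

theorem ltv_controllable_of_gramian_invertible_general {Φ : ℝ → Matrix ι ι 𝕜} (hab : a ≤ b)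
    (hB : ContinuousOn B (Icc a b)) (hinv : ∀ t ∈ Icc a b, IsUnit (Φ t))
    (hΦ : ∀ t ∈ Icc a b, HasDerivWithinAt Φ (A t * Φ t) (Icc a b) t)
    (hW : IsUnit (gramian (fun t => (Φ t)⁻¹ * B t) a b)) : IsControllableOn A B a b := by
  have hΦc : ContinuousOn Φ (Icc a b) := fun t ht => (hΦ t ht).continuousWithinAt
  have hM : ContinuousOn (fun t => (Φ t)⁻¹ * B t) (Icc a b) :=
    continuousOn_matrix_mul (continuousOn_matrix_inv hΦc hinv) hB
  exact .of_fundamental hab hinv hΦ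
    (isControllableOn_zero_of_continuousOn_of_isUnit_gramian hab hM hW)

end Control

theorem ltv_controllable_of_gramian_invertible
    (n p : ℕ)
    (A : ℝ → Matrix (Fin n) (Fin n) ℝ)
    (B : ℝ → Matrix (Fin n) (Fin p) ℝ)
    (hA : ContinuousOn A (Set.Icc (0:ℝ) 1))
    (hB : ContinuousOn B (Set.Icc (0:ℝ) 1))
    (Φ : ℝ → Matrix (Fin n) (Fin n) ℝ)
    (hΦ0 : Φ 0 = 1)
    (hinv : ∀ t ∈ Set.Icc (0:ℝ) 1, IsUnit (Φ t))
    (hΦ : ∀ t ∈ Set.Icc (0:ℝ) 1,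
      HasDerivWithinAt Φ (A t * Φ t) (Set.Icc (0:ℝ) 1) t)
    (hW : IsUnit (∫ s in (0:ℝ)..1, ((Φ s)⁻¹ * B s) * ((Φ s)⁻¹ * B s)ᵀ)) :
    ∀ z₀ z₁ : Fin n → ℝ,
      ∃ (v : ℝ → (Fin p → ℝ)) (z : ℝ → (Fin n → ℝ)),
        Continuous v ∧ z 0 = z₀ ∧ z 1 = z₁ ∧
        ∀ t ∈ Set.Icc (0:ℝ) 1,
          HasDerivWithinAt z (A t *ᵥ z t + B t *ᵥ v t) (Set.Icc (0:ℝ) 1) t := by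
  -- `ᴴ` on real matrices is `ᵀ` by definition, so the Gramians agree.
  exact ltv_controllable_of_gramian_invertible_general zero_le_one hB hinv hΦ hW
end

section
/- Let n, p, n₀ ∈ ℕ. Let M : ℝ → Matrix (Fin n) (Fin p) ℝ be continuous on [0,1] with invertible Gramian W := ∫ s in (0:ℝ)..1, M s * (M s)ᵀ, let C ∈ Matrix (Fin n) (Fin n) ℝ be invertible, and define the continuous linear map T : C([0,1], Fin p → ℝ) →L[ℝ] (Fin n → ℝ) by T v = C *ᵥ (∫ s in (0:ℝ)..1, M s *ᵥ v s). Let R : (Fin n → ℝ) →ₗ[ℝ] (Fin n₀ → ℝ) be a surjective linear map. Then the kernel of R ∘ T is a closed subspace of C([0,1], Fin p → ℝ), and the quotient C([0,1], Fin p → ℝ) ⧸ ker(R ∘ T) is finite-dimensional of dimension n₀ (Module.finrank ℝ of the quotient equals n₀). -/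
open scoped Matrix

attribute [local instance] Matrix.frobeniusNormedAddCommGroup Matrix.frobeniusNormedSpace

/-!
The open-loop control `v s = (M s)ᴴ w` produces the integral `∫ M v = W w`, where `W` is the
Gramian. Hence `R ∘ T` is surjective as soon as `R ∘ C ∘ W` is, and its kernel has the dimension of
the target of `R` as codimension. The kernel is closed because it is the preimage under `T` of a
subspace of a finite-dimensional space.
-/

open MeasureTheory Set

theorem isClosed_ker_linearMap_comp {𝕜 E V F : Type*} [NontriviallyNormedField 𝕜]
    [CompleteSpace 𝕜] [AddCommGroup E] [Module 𝕜 E] [TopologicalSpace E]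
    [AddCommGroup V] [Module 𝕜 V] [TopologicalSpace V] [IsTopologicalAddGroup V]
    [ContinuousSMul 𝕜 V] [T2Space V] [FiniteDimensional 𝕜 V] [AddCommGroup F] [Module 𝕜 F]
    (R : V →ₗ[𝕜] F) (T : E →L[𝕜] V) :
    IsClosed (LinearMap.ker (R ∘ₗ (T : E →ₗ[𝕜] V)) : Set E) :=
  (LinearMap.ker R).closed_of_finiteDimensional.preimage T.continuous

section Gramian

variable {𝕜 k m p : Type*} [RCLike 𝕜] [Fintype m] [Fintype p] {a b : ℝ} {μ : Measure ℝ}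

theorem intervalIntegral_mulVec_const [IsLocallyFiniteMeasure μ] {A : ℝ → Matrix m p 𝕜}
    (hA : ContinuousOn A (uIcc a b)) (w : p → 𝕜) :
    ∫ s in a..b, A s *ᵥ w ∂μ = (∫ s in a..b, A s ∂μ) *ᵥ w := by
  have : CompleteSpace (Matrix m p 𝕜) := FiniteDimensional.complete 𝕜 _
  let evalAt : Matrix m p 𝕜 →L[𝕜] m → 𝕜 :=
    LinearMap.toContinuousLinearMap ((Matrix.mulVecBilin 𝕜 𝕜).flip w)
  exact evalAt.intervalIntegral_comp_comm (hA.intervalIntegrable (μ := μ))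

/-- The controllability Gramian `∫ M Mᴴ` of `M` over `[a, b]` with respect to the measure `μ`; it
decides which endpoints are reached by controls acting through `M`. Over `ℝ` the conjugate
transpose is the transpose. -/
noncomputable def controllabilityGramian (M : ℝ → Matrix m p 𝕜) (a b : ℝ) (μ : Measure ℝ) :
    Matrix m m 𝕜 :=
  ∫ s in a..b, M s * (M s)ᴴ ∂μ

/-- The continuous control `s ↦ (M s)ᴴ w` on `[a, b]`, which steers the integral of `M v` to the
Gramian applied to `w`. -/
def gramianControl {M : ℝ → Matrix m p 𝕜} (hM : ContinuousOn M (Icc a b)) (w : m → 𝕜) :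
    C(Icc a b, p → 𝕜) where
  toFun s := (M s)ᴴ *ᵥ w
  continuous_toFun := hM.domRestrict.matrix_conjTranspose.matrix_mulVec continuous_const

theorem intervalIntegral_mulVec_gramianControl [IsLocallyFiniteMeasure μ]
    {M : ℝ → Matrix m p 𝕜} (hab : a ≤ b) (hM : ContinuousOn M (Icc a b)) (w : m → 𝕜) :
    ∫ s in a..b, M s *ᵥ gramianControl hM w (projIcc a b hab s) ∂μ =
      controllabilityGramian M a b μ *ᵥ w := by
  have hMM : ContinuousOn (fun s => M s * (M s)ᴴ) (uIcc a b) := by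
    have hmul : Continuous fun A : Matrix m p 𝕜 => A * Aᴴ := by fun_prop
    exact hmul.comp_continuousOn (uIcc_of_le hab ▸ hM)
  calc
    ∫ s in a..b, M s *ᵥ gramianControl hM w (projIcc a b hab s) ∂μ
      = ∫ s in a..b, (M s * (M s)ᴴ) *ᵥ w ∂μ := by
        refine intervalIntegral.integral_congr fun s hs => ?_
        rw [uIcc_of_le hab] at hs
        simp only [projIcc_of_mem hab hs]
        exact Matrix.mulVec_mulVec w (M s) (M s)ᴴ
    _ = controllabilityGramian M a b μ *ᵥ w := intervalIntegral_mulVec_const hMM w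

theorem kernel_of_readout_endpoint_differential_general [Finite k] [IsLocallyFiniteMeasure μ]
    {F : Type*} [AddCommGroup F] [Module 𝕜 F]
    {M : ℝ → Matrix m p 𝕜} (hab : a ≤ b) (hM : ContinuousOn M (Icc a b)) {C : Matrix k m 𝕜}
    {T : C(Icc a b, p → 𝕜) →L[𝕜] k → 𝕜}
    (hT : ∀ v, T v = C *ᵥ ∫ s in a..b, M s *ᵥ v (projIcc a b hab s) ∂μ)
    {R : (k → 𝕜) →ₗ[𝕜] F}
    (hR : Function.Surjective fun w => R ((C * controllabilityGramian M a b μ) *ᵥ w)) :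
    IsClosed (LinearMap.ker (R ∘ₗ (T : C(Icc a b, p → 𝕜) →ₗ[𝕜] k → 𝕜)) :
      Set C(Icc a b, p → 𝕜)) ∧
    FiniteDimensional 𝕜
      (C(Icc a b, p → 𝕜) ⧸ LinearMap.ker (R ∘ₗ (T : C(Icc a b, p → 𝕜) →ₗ[𝕜] k → 𝕜))) ∧
    Module.finrank 𝕜
      (C(Icc a b, p → 𝕜) ⧸ LinearMap.ker (R ∘ₗ (T : C(Icc a b, p → 𝕜) →ₗ[𝕜] k → 𝕜))) =
        Module.finrank 𝕜 F := by
  have hRT : Function.Surjective (R ∘ₗ (T : C(Icc a b, p → 𝕜) →ₗ[𝕜] k → 𝕜)) := fun y => by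
    obtain ⟨w, rfl⟩ := hR y
    refine ⟨gramianControl hM w, congrArg R ?_⟩
    change T (gramianControl hM w) = _
    rw [hT, intervalIntegral_mulVec_gramianControl, Matrix.mulVec_mulVec]
  have : FiniteDimensional 𝕜 F :=
    .of_surjective (R ∘ₗ (C * controllabilityGramian M a b μ).mulVecLin) hR
  let quotientEquiv := LinearMap.quotKerEquivOfSurjective _ hRT
  exact ⟨isClosed_ker_linearMap_comp R T, quotientEquiv.symm.finiteDimensional,
    quotientEquiv.finrank_eq⟩

end Gramian

theorem kernel_of_readout_endpoint_differential
    (n p n₀ : ℕ)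
    (M : ℝ → Matrix (Fin n) (Fin p) ℝ)
    (hM : ContinuousOn M (Set.Icc (0:ℝ) 1))
    (hWinv : IsUnit (∫ s in (0:ℝ)..1, M s * (M s)ᵀ))
    (C : Matrix (Fin n) (Fin n) ℝ)
    (hCinv : IsUnit C)
    (T : C(Set.Icc (0:ℝ) 1, Fin p → ℝ) →L[ℝ] (Fin n → ℝ))
    (hT : ∀ v, T v = C *ᵥ (∫ s in (0:ℝ)..1, M s *ᵥ v (Set.projIcc 0 1 zero_le_one s)))
    (R : (Fin n → ℝ) →ₗ[ℝ] (Fin n₀ → ℝ))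
    (hR : Function.Surjective R) :
    IsClosed ((LinearMap.ker (R ∘ₗ (T : C(Set.Icc (0:ℝ) 1, Fin p → ℝ) →ₗ[ℝ] (Fin n → ℝ)))
        : Submodule ℝ C(Set.Icc (0:ℝ) 1, Fin p → ℝ)) : Set C(Set.Icc (0:ℝ) 1, Fin p → ℝ)) ∧
    FiniteDimensional ℝ
      (C(Set.Icc (0:ℝ) 1, Fin p → ℝ) ⧸
        LinearMap.ker (R ∘ₗ (T : C(Set.Icc (0:ℝ) 1, Fin p → ℝ) →ₗ[ℝ] (Fin n → ℝ)))) ∧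
    Module.finrank ℝ
      (C(Set.Icc (0:ℝ) 1, Fin p → ℝ) ⧸
        LinearMap.ker (R ∘ₗ (T : C(Set.Icc (0:ℝ) 1, Fin p → ℝ) →ₗ[ℝ] (Fin n → ℝ)))) = n₀ := by
  have hCW : IsUnit (C * controllabilityGramian M 0 1 volume) := hCinv.mul hWinv
  simpa only [Module.finrank_fin_fun] using kernel_of_readout_endpoint_differential_general
    zero_le_one hM hT (hR.comp (Matrix.mulVec_surjective_iff_isUnit.2 hCW))
end
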